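/- Let α > 0 and assume M = max_{1 ≤ j ≤ N} M_j < ∞, where M_j is the α-branching number of (b̄^j, k̄^j, γ̄^j). Then limsup_{k→∞} (1/k) · log ( inf_{R∈𝓡(k)} Pr_{R,Γ}(S^{αk, k}) ) ≤ −M. -/

import Mathlib

/-!
The lower tail of the game is governed by an exponential supermartingale.

*Duality.* For a group `j` with branching number `M_j > M' ≥ 0`, there is a multiplier `lam ≥ 0` with
`∑ᵢ γᵢ exp (M' kᵢ + lam (α kᵢ - bᵢ)) ≤ 1` (`dual`). Otherwise, the exponentially tilted distribution
`qᵢ ∝ γᵢ exp (M' kᵢ + lam (α kᵢ - bᵢ))`, with `lam` chosen by complementary slackness, is feasible and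
has divergence ratio below `M_j` (`tilt`). When every `α kᵢ - bᵢ` is nonpositive the optimal
multiplier may be `∞`, and the tilted distribution is replaced by its limit.

*Upper bound.* Play the group `j` maximising `M_j` while `κ + Kmax ≤ k`, and then a group whose
coverages are at most `1`. This rule is `k`-consistent. The potential
`exp (C - M' (k - κ) + lam (α κ - μ))` in the first phase, and the indicator of `μ ≤ α k` in the
second, does not increase in mean and is at least `1` on the event `S^{αk,k}`; hence the probability
of that event is at most the initial potential `exp (C - M' k)` (`PrS_le`).

*Lower bound.* Feasibility provides in each group a letter with `b ≤ α k`. Following these letters,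
any `k`-consistent rule reaches coverage exactly `k` within budget, so the probability is at least
`c ^ k` with `c = min γ` (`le_PrS`). The infimum is therefore positive and the sequence in the `limsup`
is bounded below, which rules out the junk values of `Real.log 0` and of a real `limsup`.
-/

open scoped Classical

noncomputable section

namespace RB

/-- The alphabet `𝒳`, given as the disjoint union of the groups `𝒳_j`. -/
abbrev X (N : ℕ) (r : Fin N → ℕ) : Type := (j : Fin N) × Fin (r j)

variable {N : ℕ} {r : Fin N → ℕ}

/-- the coverage `κ` of a word (`K` is the concatenation of the `k̄ʲ`) -/
def kap (K : (j : Fin N) → Fin (r j) → ℕ) (l : List (X N r)) : ℕ :=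
  (l.map fun a => K a.1 a.2).sum

/-- the cost `μ` of a word (`B` is the concatenation of the `b̄ʲ`) -/
def mu (B : (j : Fin N) → Fin (r j) → ℕ) (l : List (X N r)) : ℕ :=
  (l.map fun a => B a.1 a.2).sum

/-- `P_{R,Υ}(ā) = ∏_ℓ [Υ_{a_ℓ}` if `a_ℓ ∈ 𝒳_{R(a_1,…,a_{ℓ-1})}`, else `0]` -/
def wordP (R : List (X N r) → Fin N) (Υ : (j : Fin N) → Fin (r j) → ℝ)
    (l : List (X N r)) : ℝ :=
  ∏ ℓ : Fin l.length,
    if (l.get ℓ).1 = R (l.take ℓ.1) then Υ (l.get ℓ).1 (l.get ℓ).2 else 0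

/-- the set of words `A^{b,k}` -/
def ASet (B K : (j : Fin N) → Fin (r j) → ℕ) (bb kb : ℝ) : Set (List (X N r)) :=
  if bb < 0 then ∅
  else if kb ≤ 0 then {[]}
  else {l | l ≠ [] ∧ (mu B l : ℝ) ≤ bb ∧ kb ≤ (kap K l : ℝ) ∧ (kap K l.dropLast : ℝ) < kb}

/-- `Pr_{R,Υ}(S^{b,k}) = Σ_{ā ∈ A^{b,k}} P_{R,Υ}(ā)` (the set `A^{b,k}` is finite,
so the `tsum` is the finite sum) -/
def PrS (B K : (j : Fin N) → Fin (r j) → ℕ) (R : List (X N r) → Fin N)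
    (Υ : (j : Fin N) → Fin (r j) → ℝ) (bb kb : ℝ) : ℝ :=
  ∑' l : ASet B K bb kb, wordP R Υ l.1

/-- `k`-consistent rules mappings: whenever `κ(ā) < k`, every `i ∈ 𝒳_{R(ā)}`
satisfies `K_i ≤ k - κ(ā)`. -/
def Consistent (K : (j : Fin N) → Fin (r j) → ℕ) (k : ℕ)
    (R : List (X N r) → Fin N) : Prop :=
  ∀ l : List (X N r), kap K l < k → ∀ i : Fin (r (R l)), K (R l) i + kap K l ≤ k

/-- Kullback-Leibler divergence -/
def KL {ρ : ℕ} (q g : Fin ρ → ℝ) : ℝ := ∑ i, q i * Real.log (q i / g i)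

/-- the set of values of the `α`-branching optimization problem -/
def BrSet (α : ℝ) {ρ : ℕ} (bv kv : Fin ρ → ℕ) (g : Fin ρ → ℝ) : Set ℝ :=
  {x | ∃ q : Fin ρ → ℝ, (∀ i, 0 ≤ q i) ∧ (∑ i, q i = 1) ∧
        (∑ i, q i * (bv i : ℝ)) ≤ α * ∑ i, q i * (kv i : ℝ) ∧
        x = KL q g / ∑ i, q i * (kv i : ℝ)}

end RB

namespace RB

/-! ### Duality for the branching problem -/

section Dual

variable {ρ : ℕ}

/-- Unnormalised weights `u` whose normalisation is feasible and which satisfy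
`∑ uᵢ log (uᵢ / gᵢ) = M' ∑ uᵢ kᵢ` have total mass below `1` whenever `M'` is below the
branching number. -/
lemma tilt {α : ℝ} (hα : 0 < α) {bv kv : Fin ρ → ℕ} (hb : ∀ i, 1 ≤ bv i) {g : Fin ρ → ℝ}
    (hg : ∀ i, 0 < g i) {M M' : ℝ} (hM : ∀ x ∈ BrSet α bv kv g, M ≤ x) (hMM : M' < M)
    (u : Fin ρ → ℝ) (hu : ∀ i, 0 ≤ u i) (hZ : 0 < ∑ i, u i)
    (hc : 0 ≤ ∑ i, u i * (α * kv i - bv i))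
    (hlog : ∑ i, u i * Real.log (u i / g i) = M' * ∑ i, u i * (kv i : ℝ)) :
    ∑ i, u i < 1 := by
  set Z := ∑ i, u i with hZdef
  have hbsum : Z ≤ ∑ i, u i * (bv i : ℝ) :=
    Finset.sum_le_sum fun i _ => le_mul_of_one_le_right (hu i) (by exact_mod_cast hb i)
  have hc' : ∑ i, u i * (bv i : ℝ) ≤ α * ∑ i, u i * (kv i : ℝ) := by
    have : ∑ i, u i * (α * kv i - bv i) =
        α * ∑ i, u i * (kv i : ℝ) - ∑ i, u i * (bv i : ℝ) := by
      rw [Finset.mul_sum, ← Finset.sum_sub_distrib]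
      exact Finset.sum_congr rfl fun i _ => by ring
    linarith
  have hk : 0 < ∑ i, u i * (kv i : ℝ) := by
    by_contra! h
    nlinarith
  have hdiv : ∀ f : Fin ρ → ℝ, ∑ i, u i / Z * f i = (∑ i, u i * f i) / Z := fun f => by
    rw [Finset.sum_div]
    exact Finset.sum_congr rfl fun i _ => by ring
  have hmem : KL (fun i => u i / Z) g / ∑ i, u i / Z * (kv i : ℝ) ∈ BrSet α bv kv g := by
    refine ⟨fun i => u i / Z, fun i => div_nonneg (hu i) hZ.le, ?_, ?_, rfl⟩
    · rw [← Finset.sum_div]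
      exact div_self hZ.ne'
    · simp only [hdiv]
      rw [← mul_div_assoc]
      exact div_le_div_of_nonneg_right hc' hZ.le
  have hKL : KL (fun i => u i / Z) g = (M' * ∑ i, u i * (kv i : ℝ)) / Z - Real.log Z := by
    rw [← hlog, ← hdiv]
    have : Real.log Z = ∑ i, u i / Z * Real.log Z := by
      rw [← Finset.sum_mul, ← Finset.sum_div, div_self hZ.ne', one_mul]
    rw [this, ← Finset.sum_sub_distrib]
    refine Finset.sum_congr rfl fun i _ => ?_
    rcases (hu i).eq_or_lt with h | h
    · simp [← h]
    · rw [div_right_comm, Real.log_div (div_pos h (hg i)).ne' hZ.ne']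
      ring
  have h1 := hM _ hmem
  rw [hKL, hdiv, le_div_iff₀ (div_pos hk hZ)] at h1
  have h2 : Real.log Z < 0 := by
    have h3 : 0 < (∑ i, u i * (kv i : ℝ)) / Z := div_pos hk hZ
    rw [mul_div_assoc] at h1
    nlinarith
  exact (Real.log_neg_iff hZ).1 h2

/-- A number `M'` below the branching number admits a multiplier `lam ≥ 0` for which the
exponential weight of one step has mean at most `1`. -/
lemma dual {α : ℝ} (hα : 0 < α) {bv kv : Fin ρ → ℕ} (hb : ∀ i, 1 ≤ bv i) {g : Fin ρ → ℝ}
    (hg : ∀ i, 0 < g i) {M M' : ℝ} (hM : ∀ x ∈ BrSet α bv kv g, M ≤ x) (hMM : M' < M)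
    (hc : ∃ i, (0 : ℝ) ≤ α * kv i - bv i) :
    ∃ lam : ℝ, 0 ≤ lam ∧
      ∑ i, g i * Real.exp (M' * kv i + lam * (α * kv i - bv i)) ≤ 1 := by
  set c : Fin ρ → ℝ := fun i => α * kv i - bv i with hcdef
  obtain ⟨i₁, hi₁⟩ := hc
  by_cases hpos : ∃ i, 0 < c i
  · -- `ψ` is the derivative of the exponential moment in the multiplier
    let ψ : ℝ → ℝ := fun t => ∑ i, g i * Real.exp (M' * kv i + t * c i) * c i
    have hslack : ∃ t, 0 ≤ t ∧ 0 ≤ ψ t ∧ t * ψ t = 0 := by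
      by_cases h0 : 0 ≤ ψ 0
      · exact ⟨0, le_rfl, h0, zero_mul _⟩
      · push Not at h0
        obtain ⟨i₀, hi₀⟩ := hpos
        set a := g i₀ * Real.exp (M' * kv i₀) * c i₀ ^ 2 with ha
        have ha0 : 0 < a := by have := hg i₀; positivity
        have hgrow : ∀ t, 0 ≤ t → ψ 0 + t * a ≤ ψ t := by
          intro t ht
          have hterm : ∀ i, g i * Real.exp (M' * kv i + 0 * c i) * c i +
              (if i = i₀ then t * a else 0) ≤ g i * Real.exp (M' * kv i + t * c i) * c i := by
            intro i
            have hE : 0 < g i * Real.exp (M' * kv i) := by have := hg i; positivity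
            rw [zero_mul, add_zero, Real.exp_add, ← mul_assoc]
            have he := Real.add_one_le_exp (t * c i)
            split_ifs with h
            · subst h
              have : g i * Real.exp (M' * kv i) * c i * (t * c i + 1) ≤
                  g i * Real.exp (M' * kv i) * c i * Real.exp (t * c i) :=
                mul_le_mul_of_nonneg_left he (by positivity)
              linarith
            · have : c i ≤ Real.exp (t * c i) * c i := by
                rcases le_total 0 (c i) with hci | hci
                · have : 1 ≤ Real.exp (t * c i) := Real.one_le_exp (mul_nonneg ht hci)
                  nlinarith
                · have : Real.exp (t * c i) ≤ 1 :=
                    Real.exp_le_one_iff.2 (mul_nonpos_of_nonneg_of_nonpos ht hci)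
                  nlinarith
              nlinarith [mul_le_mul_of_nonneg_left this hE.le]
          have := Finset.sum_le_sum fun i (_ : i ∈ Finset.univ) => hterm i
          rw [Finset.sum_add_distrib] at this
          simpa [ψ] using this
        have hcont : Continuous ψ := by fun_prop
        have hL : 0 ≤ -ψ 0 / a := div_nonneg (by linarith) ha0.le
        have hψL : 0 ≤ ψ (-ψ 0 / a) := by
          have := hgrow _ hL
          rw [div_mul_cancel₀ _ ha0.ne'] at this
          linarith
        obtain ⟨t, ht, hψt⟩ := intermediate_value_Icc hL hcont.continuousOn ⟨h0.le, hψL⟩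
        exact ⟨t, ht.1, hψt.ge, by rw [hψt, mul_zero]⟩
    obtain ⟨t, ht, hψ, htψ⟩ := hslack
    refine ⟨t, ht, (tilt hα hb hg hM hMM
      (fun i => g i * Real.exp (M' * kv i + t * c i)) ?_ ?_ hψ ?_).le⟩
    · intro i
      have := hg i
      positivity
    · exact Finset.sum_pos (fun i _ => by have := hg i; positivity) ⟨i₁, Finset.mem_univ _⟩
    · have : ∀ i, g i * Real.exp (M' * kv i + t * c i) *
          Real.log (g i * Real.exp (M' * kv i + t * c i) / g i) =
          M' * (g i * Real.exp (M' * kv i + t * c i) * kv i) +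
          t * (g i * Real.exp (M' * kv i + t * c i) * c i) := by
        intro i
        rw [mul_div_cancel_left₀ _ (hg i).ne', Real.log_exp]
        ring
      simp only [this]
      rw [Finset.sum_add_distrib, ← Finset.mul_sum, ← Finset.mul_sum]
      simpa [ψ] using htψ
  · -- the optimal multiplier is `∞`: the limiting weights live on `{i | c i = 0}`
    push Not at hpos
    have hi₁0 : c i₁ = 0 := le_antisymm (hpos i₁) hi₁
    have hlt : ∑ i, (if c i = 0 then g i * Real.exp (M' * kv i) else 0) < 1 := by
      have hnn : ∀ i, 0 ≤ (if c i = 0 then g i * Real.exp (M' * kv i) else 0) := by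
        intro i
        have := hg i
        split_ifs <;> positivity
      refine tilt hα hb hg hM hMM _ hnn ?_ ?_ ?_
      · refine Finset.sum_pos' (fun i _ => hnn i) ⟨i₁, Finset.mem_univ _, ?_⟩
        have := hg i₁
        rw [if_pos hi₁0]
        positivity
      · refine Finset.sum_nonneg fun i _ => ?_
        change 0 ≤ _ * c i
        split_ifs with h
        · rw [h, mul_zero]
        · rw [zero_mul]
      · rw [Finset.mul_sum]
        refine Finset.sum_congr rfl fun i _ => ?_
        split_ifs with h
        · rw [mul_div_cancel_left₀ _ (hg i).ne', Real.log_exp]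
          ring
        · simp
    have htend : Filter.Tendsto (fun t : ℝ => ∑ i, g i * Real.exp (M' * kv i + t * c i))
        Filter.atTop (nhds (∑ i, (if c i = 0 then g i * Real.exp (M' * kv i) else 0))) := by
      refine tendsto_finsetSum _ fun i _ => ?_
      split_ifs with h
      · simp [h]
      · have hci : c i < 0 := lt_of_le_of_ne (hpos i) h
        rw [← mul_zero (g i)]
        refine Filter.Tendsto.const_mul _ (Real.tendsto_exp_atBot.comp ?_)
        exact Filter.tendsto_atBot_add_const_left _ _
          (Filter.tendsto_id.atTop_mul_const_of_neg hci)
    obtain ⟨t, ht, ht0⟩ := ((htend.eventually (gt_mem_nhds hlt)).and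
      (Filter.eventually_ge_atTop 0)).exists
    exact ⟨t, ht0, ht.le⟩

/-- Feasibility of the branching problem yields a single letter with `b ≤ α k`. -/
lemma exists_letter {α : ℝ} {bv kv : Fin ρ → ℕ} {g : Fin ρ → ℝ}
    (h : (BrSet α bv kv g).Nonempty) : ∃ i, (bv i : ℝ) ≤ α * kv i := by
  obtain ⟨x, q, hq, hq1, hqc, -⟩ := h
  by_contra! hcon
  have hle : ∀ i ∈ Finset.univ, q i * (α * kv i) ≤ q i * (bv i : ℝ) := fun i _ =>
    mul_le_mul_of_nonneg_left (hcon i).le (hq i)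
  obtain ⟨i, -, hi⟩ : ∃ i ∈ Finset.univ, 0 < q i :=
    Finset.exists_lt_of_sum_lt (by simp [hq1])
  have := Finset.sum_lt_sum hle ⟨i, Finset.mem_univ _, mul_lt_mul_of_pos_left (hcon i) hi⟩
  rw [Finset.mul_sum] at hqc
  have e : ∑ i, q i * (α * kv i) = ∑ i, α * (q i * kv i) :=
    Finset.sum_congr rfl fun i _ => by ring
  linarith

end Dual

/-! ### Words and the supermartingale bound -/

section Words

variable {N : ℕ} {r : Fin N → ℕ}

lemma kap_append (K : (j : Fin N) → Fin (r j) → ℕ) (l m : List (X N r)) :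
    kap K (l ++ m) = kap K l + kap K m := by simp [kap]

lemma mu_append (B : (j : Fin N) → Fin (r j) → ℕ) (l m : List (X N r)) :
    mu B (l ++ m) = mu B l + mu B m := by simp [mu]

lemma kap_single (K : (j : Fin N) → Fin (r j) → ℕ) (x : X N r) :
    kap K [x] = K x.1 x.2 := by simp [kap]

lemma mu_single (B : (j : Fin N) → Fin (r j) → ℕ) (x : X N r) :
    mu B [x] = B x.1 x.2 := by simp [mu]

lemma wordP_nil (R : List (X N r) → Fin N) (Υ : (j : Fin N) → Fin (r j) → ℝ) :
    wordP R Υ [] = 1 := by simp [wordP]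

lemma wordP_cons (R : List (X N r) → Fin N) (Υ : (j : Fin N) → Fin (r j) → ℝ)
    (x : X N r) (l : List (X N r)) :
    wordP R Υ (x :: l) =
      (if x.1 = R [] then Υ x.1 x.2 else 0) * wordP (fun m => R (x :: m)) Υ l := by
  unfold wordP
  have e := Fin.prod_univ_succ (n := l.length) (fun ℓ : Fin (l.length + 1) =>
    if ((x :: l).get ℓ).1 = R ((x :: l).take ℓ.1) then
      Υ ((x :: l).get ℓ).1 ((x :: l).get ℓ).2 else 0)
  exact e

lemma wordP_nonneg (R : List (X N r) → Fin N) {Υ : (j : Fin N) → Fin (r j) → ℝ}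
    (hΥ : ∀ j i, 0 < Υ j i) (l : List (X N r)) : 0 ≤ wordP R Υ l :=
  Finset.prod_nonneg fun ℓ _ => by
    split_ifs
    · exact (hΥ _ _).le
    · exact le_rfl

lemma mem_ASet {B K : (j : Fin N) → Fin (r j) → ℕ} {α : ℝ} (hα : 0 < α) {k : ℕ} (hk : 0 < k)
    {l : List (X N r)} :
    l ∈ ASet B K (α * k) k ↔
      l ≠ [] ∧ (mu B l : ℝ) ≤ α * k ∧ k ≤ kap K l ∧ kap K l.dropLast < k := by
  have hk' : (0 : ℝ) < k := by exact_mod_cast hk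
  have h1 : ¬ α * (k : ℝ) < 0 := by nlinarith
  unfold ASet
  rw [if_neg h1, if_neg (not_le.2 hk')]
  simp only [Set.mem_ofPred_eq, Nat.cast_le, Nat.cast_lt]

lemma sum_letters (j : Fin N) (f : X N r → ℝ) :
    ∑ x : X N r, (if x.1 = j then f x else 0) = ∑ i, f ⟨j, i⟩ := by
  rw [Fintype.sum_sigma, Finset.sum_eq_single j]
  · simp
  · intro a _ ha
    simp [ha]
  · simp

/-- A potential `h` that does not increase in mean while `κ < k`, and is at least `1` on the words
that have reached coverage `k` within budget, bounds the probability of success after the prefix `p`.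
The potential is indexed by the prefix; the induction is on the length of the continuation. -/
lemma sum_wordP_le {B K : (j : Fin N) → Fin (r j) → ℕ} {α : ℝ} (hα : 0 < α) {k : ℕ} (hk : 0 < k)
    {Υ : (j : Fin N) → Fin (r j) → ℝ} (hΥ : ∀ j i, 0 < Υ j i) (R : List (X N r) → Fin N)
    (h : List (X N r) → ℝ) (h0 : ∀ p, 0 ≤ h p)
    (hstep : ∀ p, kap K p < k → ∑ i, Υ (R p) i * h (p ++ [⟨R p, i⟩]) ≤ h p)
    (hend : ∀ p, k ≤ kap K p → (mu B p : ℝ) ≤ α * k → 1 ≤ h p)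
    (n : ℕ) : ∀ (p : List (X N r)) (S : Finset (List (X N r))),
      (∀ w ∈ S, w.length ≤ n ∧ p ++ w ∈ ASet B K (α * k) k) →
      ∑ w ∈ S, wordP (fun m => R (p ++ m)) Υ w ≤ h p := by
  induction n with
  | zero =>
    intro p S hS
    have hS' : S ⊆ {[]} := fun w hw => by
      have := (hS w hw).1
      simpa using this
    rcases Finset.subset_singleton_iff.1 hS' with rfl | rfl
    · simpa using h0 p
    · have := (hS [] (by simp)).2
      rw [List.append_nil, mem_ASet hα hk] at this
      simpa [wordP_nil] using hend p this.2.2.1 this.2.1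
  | succ n ih =>
    intro p S hS
    by_cases hp : kap K p < k
    · have hne : ∀ w ∈ S, w ≠ [] := by
        rintro w hw rfl
        have := (hS [] hw).2
        rw [List.append_nil, mem_ASet hα hk] at this
        omega
      let S' : X N r → Finset (List (X N r)) := fun x =>
        S.preimage (fun l => x :: l) (fun a _ b _ hab => by simpa using hab)
      have hS'mem : ∀ x l, l ∈ S' x ↔ x :: l ∈ S := fun x l => Finset.mem_preimage
      have hsplit : ∑ w ∈ S, wordP (fun m => R (p ++ m)) Υ w =
          ∑ x : X N r, ∑ l ∈ S' x, wordP (fun m => R (p ++ m)) Υ (x :: l) := by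
        rw [Finset.sum_sigma']
        refine (Finset.sum_bij (fun a _ => a.1 :: a.2) ?_ ?_ ?_ ?_).symm
        · intro a ha
          exact (hS'mem _ _).1 (Finset.mem_sigma.1 ha).2
        · rintro ⟨x, l⟩ _ ⟨x', l'⟩ _ hab
          simp only [List.cons.injEq] at hab
          obtain ⟨rfl, rfl⟩ := hab
          rfl
        · intro w hw
          cases w with
          | nil => exact absurd rfl (hne _ hw)
          | cons x l => exact ⟨⟨x, l⟩, Finset.mem_sigma.2 ⟨Finset.mem_univ _, (hS'mem _ _).2 hw⟩, rfl⟩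
        · intro a _
          rfl
      rw [hsplit]
      refine le_trans ?_ (hstep p hp)
      rw [← sum_letters (R p) (fun x => Υ x.1 x.2 * h (p ++ [x]))]
      refine Finset.sum_le_sum fun x _ => ?_
      simp only [wordP_cons, List.append_nil]
      rw [← Finset.mul_sum, ite_mul, zero_mul]
      split_ifs with hx
      · refine mul_le_mul_of_nonneg_left ?_ (hΥ _ _).le
        have := ih (p ++ [x]) (S' x) (fun w hw => by
          have hw' : x :: w ∈ S := (hS'mem _ _).1 hw
          have := hS _ hw'
          exact ⟨by simpa using this.1, by simpa using this.2⟩)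
        simpa using this
      · exact le_rfl
    · push Not at hp
      -- the coverage is already reached, so only the empty continuation lies in `A`
      have hS' : S ⊆ {[]} := fun w hw => by
        have hA := (hS w hw).2
        rw [mem_ASet hα hk] at hA
        by_contra hw0
        have hw0' : w ≠ [] := by simpa using hw0
        have := hA.2.2.2
        rw [List.dropLast_append_of_ne_nil hw0', kap_append] at this
        omega
      rcases Finset.subset_singleton_iff.1 hS' with rfl | rfl
      · simpa using h0 p
      · have := (hS [] (by simp)).2
        rw [List.append_nil, mem_ASet hα hk] at this
        simpa [wordP_nil] using hend p this.2.2.1 this.2.1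

/-- The case of the empty prefix: every finite partial sum of the success probability is at most
the initial potential. With the constant potential `1` this also gives summability. -/
lemma finsum_le {B K : (j : Fin N) → Fin (r j) → ℕ} {α : ℝ} (hα : 0 < α) {k : ℕ} (hk : 0 < k)
    {Υ : (j : Fin N) → Fin (r j) → ℝ} (hΥ : ∀ j i, 0 < Υ j i) (R : List (X N r) → Fin N)
    (h : List (X N r) → ℝ) (h0 : ∀ p, 0 ≤ h p)
    (hstep : ∀ p, kap K p < k → ∑ i, Υ (R p) i * h (p ++ [⟨R p, i⟩]) ≤ h p)
    (hend : ∀ p, k ≤ kap K p → (mu B p : ℝ) ≤ α * k → 1 ≤ h p)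
    (S : Finset (ASet B K (α * k) k)) :
    ∑ w ∈ S, wordP R Υ w.1 ≤ h [] := by
  have := sum_wordP_le hα hk hΥ R h h0 hstep hend ((S.image Subtype.val).sup List.length) []
    (S.image Subtype.val) (fun w hw => ⟨Finset.le_sup (f := List.length) hw, by
      obtain ⟨v, -, rfl⟩ := Finset.mem_image.1 hw
      exact v.2⟩)
  rwa [Finset.sum_image (fun a _ b _ hab => Subtype.ext hab)] at this

lemma PrS_le {B K : (j : Fin N) → Fin (r j) → ℕ} {α : ℝ} (hα : 0 < α) {k : ℕ} (hk : 0 < k)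
    {Υ : (j : Fin N) → Fin (r j) → ℝ} (hΥ : ∀ j i, 0 < Υ j i) (R : List (X N r) → Fin N)
    (h : List (X N r) → ℝ) (h0 : ∀ p, 0 ≤ h p)
    (hstep : ∀ p, kap K p < k → ∑ i, Υ (R p) i * h (p ++ [⟨R p, i⟩]) ≤ h p)
    (hend : ∀ p, k ≤ kap K p → (mu B p : ℝ) ≤ α * k → 1 ≤ h p) :
    PrS B K R Υ (α * k) k ≤ h [] :=
  Real.tsum_le_of_sum_le (fun w => wordP_nonneg R hΥ w.1)
    (finsum_le hα hk hΥ R h h0 hstep hend)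

lemma summable_wordP {B K : (j : Fin N) → Fin (r j) → ℕ} {α : ℝ} (hα : 0 < α) {k : ℕ} (hk : 0 < k)
    {Υ : (j : Fin N) → Fin (r j) → ℝ} (hΥ : ∀ j i, 0 < Υ j i) (hsum : ∀ j, ∑ i, Υ j i = 1)
    (R : List (X N r) → Fin N) :
    Summable fun w : ASet B K (α * k) k => wordP R Υ w.1 :=
  summable_of_sum_le (fun w => wordP_nonneg R hΥ w.1)
    (finsum_le hα hk hΥ R (fun _ => 1) (fun _ => zero_le_one) (by simp [hsum]) (by simp))

lemma PrS_le_one {B K : (j : Fin N) → Fin (r j) → ℕ} {α : ℝ} (hα : 0 < α) {k : ℕ} (hk : 0 < k)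
    {Υ : (j : Fin N) → Fin (r j) → ℝ} (hΥ : ∀ j i, 0 < Υ j i) (hsum : ∀ j, ∑ i, Υ j i = 1)
    (R : List (X N r) → Fin N) : PrS B K R Υ (α * k) k ≤ 1 :=
  PrS_le hα hk hΥ R (fun _ => 1) (fun _ => zero_le_one) (by simp [hsum]) (by simp)

/-! ### The lower bound for consistent rules -/

/-- Under a consistent rule, a prefix with `μ ≤ α κ` extends to a word of coverage exactly `k`
by letters satisfying `b ≤ α k`. -/
lemma exists_word {B K : (j : Fin N) → Fin (r j) → ℕ} (hB : ∀ j i, 1 ≤ B j i) {α : ℝ}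
    {k : ℕ} {Υ : (j : Fin N) → Fin (r j) → ℝ}
    (hlet : ∀ j, ∃ i, (B j i : ℝ) ≤ α * K j i) {c : ℝ} (hc0 : 0 < c) (hc1 : c ≤ 1)
    (hcΥ : ∀ j i, c ≤ Υ j i) {R : List (X N r) → Fin N} (hR : Consistent K k R) (n : ℕ) :
    ∀ p : List (X N r), kap K p ≤ k → k - kap K p ≤ n → (mu B p : ℝ) ≤ α * kap K p →
      ∃ w, kap K (p ++ w) = k ∧ (mu B (p ++ w) : ℝ) ≤ α * k ∧
        (w ≠ [] → kap K (p ++ w).dropLast < k) ∧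
        c ^ n ≤ wordP (fun m => R (p ++ m)) Υ w := by
  induction n with
  | zero =>
    intro p hp hn hmu
    have : kap K p = k := by omega
    refine ⟨[], by simpa using this, by simpa [this] using hmu, by simp, by simp [wordP_nil]⟩
  | succ n ih =>
    intro p hp hn hmu
    rcases hp.eq_or_lt with hpk | hpk
    · refine ⟨[], by simpa using hpk, by simpa [hpk] using hmu, by simp, ?_⟩
      rw [wordP_nil]
      exact pow_le_one₀ hc0.le hc1
    · obtain ⟨i, hi⟩ := hlet (R p)
      have hKi : 1 ≤ K (R p) i := by
        by_contra! h
        have h0 : K (R p) i = 0 := by omega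
        have : (1 : ℝ) ≤ B (R p) i := by exact_mod_cast hB _ _
        rw [h0, Nat.cast_zero, mul_zero] at hi
        linarith
      have hcons := hR p hpk i
      have hkx : kap K (p ++ [⟨R p, i⟩]) = kap K p + K (R p) i := by
        rw [kap_append, kap_single]
      have hmx : mu B (p ++ [⟨R p, i⟩]) = mu B p + B (R p) i := by
        rw [mu_append, mu_single]
      obtain ⟨w, h1, h2, h3, h4⟩ := ih (p ++ [⟨R p, i⟩]) (by omega) (by omega) (by
        rw [hkx, hmx]
        push_cast
        linarith)
      refine ⟨⟨R p, i⟩ :: w, by simpa using h1, by simpa using h2, fun _ => ?_, ?_⟩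
      · rcases eq_or_ne w [] with rfl | hw
        · simpa using hpk
        · simpa using h3 hw
      · rw [wordP_cons, pow_succ']
        simp only [List.append_nil, if_true]
        refine mul_le_mul (hcΥ _ _) (by simpa using h4) (by positivity) ?_
        exact hc0.le.trans (hcΥ _ _)

lemma le_PrS {B K : (j : Fin N) → Fin (r j) → ℕ} (hB : ∀ j i, 1 ≤ B j i) {α : ℝ} (hα : 0 < α)
    {k : ℕ} (hk : 0 < k) {Υ : (j : Fin N) → Fin (r j) → ℝ} (hΥ : ∀ j i, 0 < Υ j i)
    (hsum : ∀ j, ∑ i, Υ j i = 1)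
    (hlet : ∀ j, ∃ i, (B j i : ℝ) ≤ α * K j i) {c : ℝ} (hc0 : 0 < c) (hc1 : c ≤ 1)
    (hcΥ : ∀ j i, c ≤ Υ j i) {R : List (X N r) → Fin N} (hR : Consistent K k R) :
    c ^ k ≤ PrS B K R Υ (α * k) k := by
  obtain ⟨w, h1, h2, h3, h4⟩ := exists_word hB hlet hc0 hc1 hcΥ hR k [] (by simp [kap])
    (by omega) (by simp [kap, mu])
  simp only [List.nil_append] at h1 h2 h3 h4
  have hw : w ≠ [] := by
    rintro rfl
    simp [kap] at h1
    omega
  have hA : w ∈ ASet B K (α * k) k := (mem_ASet hα hk).2 ⟨hw, h2, h1.ge, h3 hw⟩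
  exact h4.trans ((summable_wordP hα hk hΥ hsum R).le_tsum ⟨w, hA⟩
    (fun v _ => wordP_nonneg R hΥ v.1))

/-! ### The two-phase rule -/

/-- The rule that plays the group `j₁` while `κ + Km ≤ k`, and the group `j₀` afterwards. -/
def twoPhase (K : (j : Fin N) → Fin (r j) → ℕ) (k Km : ℕ) (j₁ j₀ : Fin N) :
    List (X N r) → Fin N :=
  fun p => if kap K p + Km ≤ k then j₁ else j₀

lemma twoPhase_consistent {K : (j : Fin N) → Fin (r j) → ℕ} {k Km : ℕ} {j₁ j₀ : Fin N}
    (hKm : ∀ j i, K j i ≤ Km) (hj₀ : ∀ i, K j₀ i ≤ 1) :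
    Consistent K k (twoPhase K k Km j₁ j₀) := by
  intro l hl
  by_cases h : kap K l + Km ≤ k
  · have e : twoPhase K k Km j₁ j₀ l = j₁ := if_pos h
    rw [e]
    intro i
    have := hKm j₁ i
    omega
  · have e : twoPhase K k Km j₁ j₀ l = j₀ := if_neg h
    rw [e]
    intro i
    have := hj₀ i
    omega

/-- The probability under the two-phase rule decays at rate `M`. The constant `(M + lam * α) * Km`
makes the first-phase potential at least `1` on every word that enters the second phase within
budget. -/
lemma PrS_twoPhase_le {B K : (j : Fin N) → Fin (r j) → ℕ} {α : ℝ} (hα : 0 < α) {k : ℕ}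
    (hk : 0 < k) {Υ : (j : Fin N) → Fin (r j) → ℝ} (hΥ : ∀ j i, 0 < Υ j i)
    (hsum : ∀ j, ∑ i, Υ j i = 1) {Km : ℕ} (hkm : Km ≤ k) {j₁ j₀ : Fin N} {M lam : ℝ}
    (hM : 0 ≤ M) (hlam : 0 ≤ lam)
    (hdual : ∑ i, Υ j₁ i * Real.exp (M * K j₁ i + lam * (α * K j₁ i - B j₁ i)) ≤ 1) :
    PrS B K (twoPhase K k Km j₁ j₀) Υ (α * k) k ≤
      Real.exp ((M + lam * α) * Km - M * k) := by
  let h₁ : List (X N r) → ℝ := fun p =>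
    Real.exp ((M + lam * α) * Km - M * k + M * kap K p + lam * (α * kap K p - mu B p))
  let h₂ : List (X N r) → ℝ := fun p => if (mu B p : ℝ) ≤ α * k then 1 else 0
  let h : List (X N r) → ℝ := fun p => if kap K p + Km ≤ k then h₁ p else h₂ p
  have h₂₁ : ∀ p, ¬ kap K p + Km ≤ k → h₂ p ≤ h₁ p := by
    intro p hp
    simp only [h₂]
    split_ifs with hmu
    · refine Real.one_le_exp ?_
      have h1 : (k : ℝ) ≤ kap K p + Km := by exact_mod_cast (not_le.1 hp).le
      have h2 := mul_le_mul_of_nonneg_left h1 hM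
      have h3 := mul_le_mul_of_nonneg_left
        (hmu.trans (mul_le_mul_of_nonneg_left h1 hα.le)) hlam
      nlinarith
    · exact (Real.exp_pos _).le
  have hle : ∀ p, h p ≤ h₁ p := fun p => by
    simp only [h]
    split_ifs with hp
    · exact le_rfl
    · exact h₂₁ p hp
  have hnil : h [] = Real.exp ((M + lam * α) * Km - M * k) := by
    simp [h, h₁, kap, mu, hkm]
  rw [← hnil]
  refine PrS_le hα hk hΥ _ h ?_ ?_ ?_
  · intro p
    simp only [h, h₂]
    split_ifs
    · exact (Real.exp_pos _).le
    · exact zero_le_one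
    · exact le_rfl
  · intro p _
    by_cases hp : kap K p + Km ≤ k
    · have e : twoPhase K k Km j₁ j₀ p = j₁ := if_pos hp
      have e' : h p = h₁ p := if_pos hp
      rw [e, e']
      calc ∑ i, Υ j₁ i * h (p ++ [⟨j₁, i⟩])
          ≤ ∑ i, Υ j₁ i * h₁ (p ++ [⟨j₁, i⟩]) :=
            Finset.sum_le_sum fun i _ => mul_le_mul_of_nonneg_left (hle (p ++ [⟨j₁, i⟩])) (hΥ j₁ i).le
        _ = h₁ p * ∑ i, Υ j₁ i *
              Real.exp (M * K j₁ i + lam * (α * K j₁ i - B j₁ i)) := by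
            rw [Finset.mul_sum]
            refine Finset.sum_congr rfl fun i _ => ?_
            simp only [h₁, kap_append, mu_append, kap_single, mu_single]
            rw [mul_left_comm, ← Real.exp_add]
            congr 2
            push_cast
            ring
        _ ≤ h₁ p := mul_le_of_le_one_right (Real.exp_pos _).le hdual
    · have hmono : ∀ x, h (p ++ [x]) ≤ h p := by
        intro x
        have hx : ¬ kap K (p ++ [x]) + Km ≤ k := by
          rw [kap_append]
          omega
        simp only [h, if_neg hp, if_neg hx, h₂]
        have : (mu B p : ℝ) ≤ mu B (p ++ [x]) := by
          rw [mu_append]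
          push_cast
          linarith [(mu B [x]).cast_nonneg (α := ℝ)]
        split_ifs with h1 h2 h2
        · exact le_rfl
        · exact absurd (this.trans h1) h2
        · exact zero_le_one
        · exact le_rfl
      generalize twoPhase K k Km j₁ j₀ p = j
      calc ∑ i, Υ j i * h (p ++ [⟨j, i⟩]) ≤ ∑ i, Υ j i * h p :=
            Finset.sum_le_sum fun i _ => mul_le_mul_of_nonneg_left (hmono ⟨j, i⟩) (hΥ j i).le
        _ = h p := by rw [← Finset.sum_mul, hsum, one_mul]
  · intro p hp hmu
    simp only [h]
    split_ifs with hpk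
    · -- here `Km = 0` and `κ = k`, and the first-phase potential is still at least `1`
      refine Real.one_le_exp ?_
      have h1 : kap K p = k := by omega
      have h2 : Km = 0 := by omega
      rw [h1, h2]
      have := mul_nonneg hlam (sub_nonneg.2 hmu)
      push_cast
      linarith
    · simp [h₂, hmu]

end Words

end RB

/-- Lemma 13, `upper_bound`:
`limsup_{k→∞} (1/k) log (inf_{R∈𝓡(k)} Pr_{R,Γ}(S^{αk,k})) ≤ -M`, where
`M = ⨆ j, M_j` is the largest `α`-branching number (finite by `hfeas`). -/
theorem stmt_14
    (N : ℕ) (hN : 1 ≤ N) (r : Fin N → ℕ) (hr : ∀ j, 1 ≤ r j)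
    (bb kb : (j : Fin N) → Fin (r j) → ℕ)
    (hbb : ∀ j i, 1 ≤ bb j i)
    (γ : (j : Fin N) → Fin (r j) → ℝ)
    (hγpos : ∀ j i, 0 < γ j i) (hγsum : ∀ j, ∑ i, γ j i = 1)
    (hks : ∃ j, ∀ i, kb j i ≤ 1)
    (α : ℝ) (hα : 0 < α)
    (hfeas : ∀ j, (RB.BrSet α (bb j) (kb j) (γ j)).Nonempty) :
    Filter.limsup (fun k : ℕ =>
        Real.log (sInf {x | ∃ R : List (RB.X N r) → Fin N,
            RB.Consistent kb k R ∧
            x = RB.PrS bb kb R γ (α * (k : ℝ)) (k : ℝ)}) / (k : ℝ))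
      Filter.atTop ≤ -(⨆ j, sInf (RB.BrSet α (bb j) (kb j) (γ j))) := by
  -- a positive lower bound for all the probabilities `γ j i`
  obtain ⟨c, hc0, hc1, hcγ⟩ : ∃ c : ℝ, 0 < c ∧ c ≤ 1 ∧ ∀ j i, c ≤ γ j i := by
    obtain ⟨x, hx⟩ := Finite.exists_min (fun x : Option (RB.X N r) =>
      x.elim (1 : ℝ) (fun a => γ a.1 a.2))
    refine ⟨x.elim (1 : ℝ) (fun a => γ a.1 a.2), ?_, hx none, fun j i => hx (some ⟨j, i⟩)⟩
    cases x with
    | none => exact one_pos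
    | some a => exact hγpos _ _
  obtain ⟨Km, hKm⟩ : ∃ Km, ∀ j i, kb j i ≤ Km := by
    obtain ⟨Km, hKm⟩ := (Set.finite_range fun a : RB.X N r => kb a.1 a.2).bddAbove
    exact ⟨Km, fun j i => hKm ⟨⟨j, i⟩, rfl⟩⟩
  obtain ⟨j₀, hj₀⟩ := hks
  have hlet : ∀ j, ∃ i, (bb j i : ℝ) ≤ α * kb j i := fun j => RB.exists_letter (hfeas j)
  set I : ℕ → ℝ := fun k => sInf {x | ∃ R : List (RB.X N r) → Fin N,
    RB.Consistent kb k R ∧ x = RB.PrS bb kb R γ (α * (k : ℝ)) (k : ℝ)} with hI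
  have hlow : ∀ k : ℕ, 0 < k → c ^ k ≤ I k := by
    intro k hk
    refine le_csInf ⟨_, _, RB.twoPhase_consistent (j₁ := j₀) hKm hj₀, rfl⟩ ?_
    rintro x ⟨R, hR, rfl⟩
    exact RB.le_PrS hbb hα hk hγpos hγsum hlet hc0 hc1 hcγ hR
  have hup : ∀ k : ℕ, 0 < k → ∀ R, RB.Consistent kb k R →
      I k ≤ RB.PrS bb kb R γ (α * (k : ℝ)) (k : ℝ) := by
    intro k hk R hR
    refine csInf_le ⟨c ^ k, ?_⟩ ⟨R, hR, rfl⟩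
    rintro x ⟨R, hR, rfl⟩
    exact RB.le_PrS hbb hα hk hγpos hγsum hlet hc0 hc1 hcγ hR
  have hpos : ∀ k : ℕ, 0 < k → 0 < I k := fun k hk => (pow_pos hc0 k).trans_le (hlow k hk)
  have hcob : Filter.IsCoboundedUnder (· ≤ ·) Filter.atTop
      (fun k : ℕ => Real.log (I k) / (k : ℝ)) := by
    refine Filter.IsCoboundedUnder.of_frequently_ge (a := Real.log c)
      (Filter.Eventually.frequently ?_)
    filter_upwards [Filter.eventually_gt_atTop 0] with k hk
    have hk' : (0 : ℝ) < k := by exact_mod_cast hk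
    rw [le_div_iff₀ hk', mul_comm, ← Real.log_pow]
    exact Real.log_le_log (pow_pos hc0 k) (hlow k hk)
  change Filter.limsup (fun k : ℕ => Real.log (I k) / (k : ℝ)) Filter.atTop ≤ _
  have : Nonempty (Fin N) := ⟨j₀⟩
  obtain ⟨j₁, hj₁⟩ := exists_eq_ciSup_of_finite
    (f := fun j => sInf (RB.BrSet α (bb j) (kb j) (γ j)))
  rw [← hj₁]
  set M := sInf (RB.BrSet α (bb j₁) (kb j₁) (γ j₁)) with hM
  rcases le_or_gt M 0 with hM0 | hM0
  · refine Filter.limsup_le_of_le hcob ?_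
    filter_upwards [Filter.eventually_gt_atTop 0] with k hk
    have h1 := (hup k hk _ (RB.twoPhase_consistent (j₁ := j₀) hKm hj₀)).trans
      (RB.PrS_le_one hα hk hγpos hγsum _)
    have := div_nonpos_of_nonpos_of_nonneg (Real.log_nonpos (hpos k hk).le h1)
      (Nat.cast_nonneg (α := ℝ) k)
    linarith
  · -- an infimum of an unbounded set of reals would be `0`
    have hbdd : BddBelow (RB.BrSet α (bb j₁) (kb j₁) (γ j₁)) := by
      by_contra h
      rw [hM, Real.sInf_of_not_bddBelow h] at hM0
      exact lt_irrefl _ hM0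
    rw [le_neg]
    refine le_of_forall_lt_imp_le_of_dense fun M₂ hM₂ => ?_
    rw [le_neg]
    obtain ⟨M₁, h21, h1M⟩ := exists_between (max_lt hM₂ hM0)
    have hM₁0 : 0 ≤ M₁ := ((le_max_right _ _).trans_lt h21).le
    have h21' : M₂ < M₁ := (le_max_left _ _).trans_lt h21
    obtain ⟨lam, hlam, hdual⟩ := RB.dual hα (hbb j₁) (hγpos j₁) (M := M) (M' := M₁)
      (fun x hx => csInf_le hbdd hx) h1M
      ((hlet j₁).imp fun i hi => sub_nonneg.2 hi)
    refine Filter.limsup_le_of_le hcob ?_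
    have htend : Filter.Tendsto (fun k : ℕ => (M₁ + lam * α) * Km / (k : ℝ)) Filter.atTop
        (nhds 0) := tendsto_const_div_atTop_nhds_zero_nat _
    filter_upwards [Filter.eventually_gt_atTop 0, Filter.eventually_ge_atTop Km,
      htend.eventually (gt_mem_nhds (sub_pos.2 h21'))] with k hk hkm hsmall
    have hk' : (0 : ℝ) < k := by exact_mod_cast hk
    have h1 := (hup k hk _ (RB.twoPhase_consistent (j₁ := j₁) hKm hj₀)).trans
      (RB.PrS_twoPhase_le hα hk hγpos hγsum hkm hM₁0 hlam hdual)
    have h2 := Real.log_le_log (hpos k hk) h1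
    rw [Real.log_exp] at h2
    rw [div_lt_iff₀ hk'] at hsmall
    rw [div_le_iff₀ hk']
    linarith
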